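/- Let A be a dg category and let B be a dg category with translations. Let f: A_∞ → B_∞ be an A∞-functor. Define F(A[i]) := f(A)[i] on objects, and for every chain of n composable morphisms ⟨i_{m+1}|α^m|i_m⟩ of A^[•] define F_n(s⟨i_{n+1}|α^n|i_n⟩, …, s⟨i_2|α^1|i_1⟩) := ⟨i_{n+1}| f_n(sα^n, …, sα^1) |i_1⟩ · (−1)^{i_1+i_2+⋯+i_{n+1}}. Then F is an A∞-functor (A^[•])_∞ → B_∞ extending f along the inclusion A → A^[•], A ↦ A[0]. -/

import Mathlib

/-! Core formal framework: dg categories over a field `k`, given by explicit data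
(`DGData`) together with the dg-category axioms (`IsDGCat`), following the
conventions of the paper: hom-sets are `ℤ`-graded `k`-vector spaces, `d` has
degree `1`, composition is associative of degree `0`, identities are closed of
degree `0`. -/

namespace P

universe u v

structure DGData (k : Type) [Field k] where
  Obj : Type u
  Hom : Obj → Obj → ℤ → Type v
  homAdd : ∀ A B i, AddCommGroup (Hom A B i)
  homMod : ∀ A B i, Module k (Hom A B i)
  d : ∀ {A B : Obj} {i : ℤ}, Hom A B i → Hom A B (i + 1)
  comp : ∀ {A B C : Obj} {i j : ℤ}, Hom B C j → Hom A B i → Hom A C (j + i)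
  id : ∀ A : Obj, Hom A A 0

attribute [instance] DGData.homAdd DGData.homMod

variable {k : Type} [Field k]

/-- Transport of a morphism along an equality of degrees. -/
def DGData.cast (D : DGData k) {A B : D.Obj} {i i' : ℤ} (h : i = i')
    (x : D.Hom A B i) : D.Hom A B i' := h ▸ x

/-- Transport of a morphism along equalities of its source, target and degree. -/
def DGData.hcast (D : DGData k) {A A' B B' : D.Obj} {i i' : ℤ}
    (hA : A = A') (hB : B = B') (hi : i = i') (x : D.Hom A B i) :
    D.Hom A' B' i' := by
  subst hA; subst hB; subst hi; exact x

/-- The axioms making the data `D` a dg category: hom-sets are complexes of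
`k`-vector spaces, composition is `k`-bilinear, the graded Leibniz rule holds,
composition is associative, and identities are closed two-sided units. -/
structure IsDGCat (D : DGData k) : Prop where
  d_add : ∀ {A B : D.Obj} {g : ℤ} (x y : D.Hom A B g), D.d (x + y) = D.d x + D.d y
  d_smul : ∀ {A B : D.Obj} {g : ℤ} (c : k) (x : D.Hom A B g), D.d (c • x) = c • D.d x
  comp_add_left : ∀ {A B C : D.Obj} {g h : ℤ} (β₁ β₂ : D.Hom B C h) (α : D.Hom A B g),
      D.comp (β₁ + β₂) α = D.comp β₁ α + D.comp β₂ α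
  comp_add_right : ∀ {A B C : D.Obj} {g h : ℤ} (β : D.Hom B C h) (α₁ α₂ : D.Hom A B g),
      D.comp β (α₁ + α₂) = D.comp β α₁ + D.comp β α₂
  comp_smul_left : ∀ {A B C : D.Obj} {g h : ℤ} (c : k) (β : D.Hom B C h) (α : D.Hom A B g),
      D.comp (c • β) α = c • D.comp β α
  comp_smul_right : ∀ {A B C : D.Obj} {g h : ℤ} (c : k) (β : D.Hom B C h) (α : D.Hom A B g),
      D.comp β (c • α) = c • D.comp β α
  d_d : ∀ {A B : D.Obj} {g : ℤ} (x : D.Hom A B g), D.d (D.d x) = 0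
  leibniz : ∀ {A B C : D.Obj} {g h : ℤ} (β : D.Hom B C h) (α : D.Hom A B g),
      D.d (D.comp β α) =
        D.cast (by ring) (D.comp (D.d β) α) +
          ((-1 : k) ^ h) • D.cast (by ring) (D.comp β (D.d α))
  assoc : ∀ {A B C E : D.Obj} {g h l : ℤ} (γ : D.Hom C E l) (β : D.Hom B C h)
      (α : D.Hom A B g),
      D.comp γ (D.comp β α) = D.cast (by ring) (D.comp (D.comp γ β) α)
  id_comp : ∀ {A B : D.Obj} {g : ℤ} (α : D.Hom A B g),
      D.cast (zero_add g) (D.comp (D.id B) α) = α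
  comp_id : ∀ {A B : D.Obj} {g : ℤ} (α : D.Hom A B g),
      D.cast (add_zero g) (D.comp α (D.id A)) = α
  d_id : ∀ A : D.Obj, D.d (D.id A) = 0

/-- A morphism is closed if its differential vanishes. -/
def DGData.IsClosed (D : DGData k) {A B : D.Obj} {g : ℤ} (x : D.Hom A B g) : Prop :=
  D.d x = 0

/-- The Maurer-Cartan equation `d(p) + p ∘ p = 0` for a degree `1` endomorphism. -/
def DGData.MC (D : DGData k) {A : D.Obj} (p : D.Hom A A 1) : Prop :=
  D.d p + D.comp p p = 0

/-- A chain of `n` (in fact, infinitely many; only the first `n` are ever used)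
composable morphisms `α m : A m ⟶ A (m+1)`, where `α m` is recorded together
with its *shifted* degree `g m`, i.e. `α m` lies in degree `g m + 1`.  This
encodes an element `s α_n ⊗ ⋯ ⊗ s α_1` of `S(A n, A (n+1)) ⊗ ⋯ ⊗ S(A 0, A 1)`
(the chain is indexed so that index `0` is the first morphism `α^1`). -/
abbrev DGData.Chain (D : DGData k) (A : ℕ → D.Obj) (g : ℕ → ℤ) : Type _ :=
  ∀ m : ℕ, D.Hom (A m) (A (m + 1)) (g m + 1)

/-- Partial sums of the (shifted) degrees of a chain. -/
def psum (g : ℕ → ℤ) (n : ℕ) : ℤ := ∑ m ∈ Finset.range n, g m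

lemma psum_succ (g : ℕ → ℤ) (r : ℕ) : psum g (r + 1) = psum g r + g r :=
  Finset.sum_range_succ g r

lemma psum_one (g : ℕ → ℤ) : psum g 1 = g 0 := by simp [psum]

lemma psum_two (g : ℕ → ℤ) : psum g 2 = g 0 + g 1 := by
  simp [psum, Finset.sum_range_succ]

lemma psum_const_zero (n : ℕ) : psum (fun _ => (0 : ℤ)) n = 0 := by simp [psum]

lemma psum_shift (g : ℕ → ℤ) (t : ℕ) :
    ∀ r, psum (fun m => g (t + m)) r = psum g (t + r) - psum g t := by
  intro r
  induction r with
  | zero => simp [psum]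
  | succ r ih => rw [psum_succ, ih, Nat.add_succ, psum_succ]; ring

/-- Update of a chain in one slot (keeping the degree). -/
def DGData.upd0 (D : DGData k) {A : ℕ → D.Obj} {g : ℕ → ℤ} (α : D.Chain A g)
    (m : ℕ) (v : D.Hom (A m) (A (m + 1)) (g m + 1)) : D.Chain A g := fun t =>
  if h : t = m then (by subst h; exact v) else α t

/-- Objects of the chain obtained by replacing the `j` consecutive entries
starting at position `l` by a single entry. -/
def splObj {τ : Type u} (A : ℕ → τ) (l j : ℕ) : ℕ → τ := fun t =>
  if t ≤ l then A t else A (t + j - 1)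

/-- Degrees of the spliced chain; the new entry at position `l` has (shifted)
degree `w`. -/
def splG (g : ℕ → ℤ) (l j : ℕ) (w : ℤ) : ℕ → ℤ := fun t =>
  if t < l then g t else if t = l then w else g (t + j - 1)

lemma splObj_le {τ : Type u} (A : ℕ → τ) {l j t : ℕ} (h : t ≤ l) :
    splObj A l j t = A t := if_pos h

lemma splObj_gt {τ : Type u} (A : ℕ → τ) {l j t : ℕ} (h : ¬ t ≤ l) :
    splObj A l j t = A (t + j - 1) := if_neg h

lemma splObj_zero {τ : Type u} (A : ℕ → τ) (l j : ℕ) : splObj A l j 0 = A 0 :=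
  splObj_le A (Nat.zero_le l)

lemma splObj_last {τ : Type u} (A : ℕ → τ) {l j n : ℕ} (h1 : 1 ≤ j)
    (h2 : l + j ≤ n) : splObj A l j (n - j + 1) = A n := by
  unfold splObj
  rw [if_neg (by omega)]
  exact congrArg A (by omega)

lemma splG_lt {g : ℕ → ℤ} {l j : ℕ} {w : ℤ} {t : ℕ} (h : t < l) :
    splG g l j w t = g t := by unfold splG; rw [if_pos h]

lemma splG_eq {g : ℕ → ℤ} {l j : ℕ} {w : ℤ} {t : ℕ} (h : t = l) :
    splG g l j w t = w := by unfold splG; rw [if_neg (by omega), if_pos h]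

lemma splG_gt {g : ℕ → ℤ} {l j : ℕ} {w : ℤ} {t : ℕ} (h1 : ¬ t < l) (h2 : ¬ t = l) :
    splG g l j w t = g (t + j - 1) := by unfold splG; rw [if_neg h1, if_neg h2]

/-- The sum of the degrees of the spliced chain, when the inserted entry has
the degree of a degree `1` operation applied to the block it replaces. -/
lemma psum_splG (g : ℕ → ℤ) {l j n : ℕ} (h1 : 1 ≤ j) (h2 : l + j ≤ n) :
    psum (splG g l j (psum (fun m => g (l + m)) j + 1)) (n - j + 1) =
      psum g n + 1 := by
  have hln : l + 1 ≤ n - j + 1 := by omega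
  rw [psum, ← Finset.sum_range_add_sum_Ico _ hln]
  have e1 : (∑ t ∈ Finset.range (l + 1),
      splG g l j (psum (fun m => g (l + m)) j + 1) t)
      = psum g l + (psum (fun m => g (l + m)) j + 1) := by
    rw [Finset.sum_range_succ]
    congr 1
    · exact Finset.sum_congr rfl fun t ht => splG_lt (Finset.mem_range.mp ht)
    · exact splG_eq rfl
  have e2 : (∑ t ∈ Finset.Ico (l + 1) (n - j + 1),
      splG g l j (psum (fun m => g (l + m)) j + 1) t)
      = ∑ u ∈ Finset.Ico (l + j) n, g u := by
    rw [Finset.sum_Ico_eq_sum_range, Finset.sum_Ico_eq_sum_range]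
    have hc : n - j + 1 - (l + 1) = n - (l + j) := by omega
    rw [hc]
    refine Finset.sum_congr rfl fun i hi => ?_
    rw [splG_gt (by omega) (by omega)]
    congr 1
    omega
  have e3 : (∑ u ∈ Finset.Ico (l + j) n, g u) = psum g n - psum g (l + j) := by
    rw [psum, psum, Finset.sum_Ico_eq_sub _ (by omega : l + j ≤ n)]
  rw [e1, e2, e3, psum_shift g l j]
  ring

/-- The spliced chain: replace the `j` entries starting at position `l` by the
single entry `v`. -/
def DGData.splChain (D : DGData k) {A : ℕ → D.Obj} {g : ℕ → ℤ} (α : D.Chain A g)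
    (l j : ℕ) (hj : 1 ≤ j) {w : ℤ} (v : D.Hom (A l) (A (l + j)) (w + 1)) :
    D.Chain (splObj A l j) (splG g l j w) := fun t =>
  if h1 : t < l then
    D.hcast (splObj_le A (le_of_lt h1)).symm (splObj_le A (by omega)).symm
      (by rw [splG_lt h1]) (α t)
  else if h2 : t = l then
    D.hcast (by rw [show t = l from h2]; exact (splObj_le A le_rfl).symm)
      (by rw [show t = l from h2, splObj_gt A (show ¬ l + 1 ≤ l by omega)]
          exact congrArg A (by omega))
      (by rw [splG_eq h2]) v
  else
    D.hcast (splObj_gt A (by omega)).symm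
      (by rw [splObj_gt A (show ¬ t + 1 ≤ l by omega)]; exact congrArg A (by omega))
      (by rw [splG_gt h1 h2]) (α (t + j - 1))

end P

namespace P

variable {k : Type} [Field k]

/-- Data of chosen translations: for every object `A` and `i : ℤ` an object
`A[i] = shift A i` together with a degree `i` morphism `s A i : A[i] → A` and a
candidate inverse. -/
structure TranslationData (D : DGData k) where
  shift : D.Obj → ℤ → D.Obj
  s : ∀ (A : D.Obj) (i : ℤ), D.Hom (shift A i) A i
  sInv : ∀ (A : D.Obj) (i : ℤ), D.Hom A (shift A i) (-i)

/-- The axioms: `s A i` is a closed isomorphism of degree `i` with inverse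
`sInv A i`. -/
structure IsTranslationData (D : DGData k) (T : TranslationData D) : Prop where
  s_closed : ∀ A i, D.d (T.s A i) = 0
  sInv_closed : ∀ A i, D.d (T.sInv A i) = 0
  s_sInv : ∀ A i, D.cast (by ring) (D.comp (T.s A i) (T.sInv A i)) = D.id A
  sInv_s : ∀ A i, D.cast (by ring) (D.comp (T.sInv A i) (T.s A i)) = D.id (T.shift A i)

/-- A dg category `has translations` if it is equipped with such data
satisfying the axioms. -/
structure HasTranslations (D : DGData k) where
  T : TranslationData D
  isT : IsTranslationData D T

/-- The morphism `⟨j|α|i⟩ := sInv ∘ α ∘ s : A[i] → B[j]` between translations. -/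
def trHom (D : DGData k) (T : TranslationData D) {A B : D.Obj} {a : ℤ}
    (j : ℤ) (α : D.Hom A B a) (i : ℤ) :
    D.Hom (T.shift A i) (T.shift B j) (-j + (a + i)) :=
  D.comp (T.sInv B j) (D.comp α (T.s A i))

/-- Objects of the completion by translations: pairs `A[i]`. -/
abbrev trObj (D : DGData k) : Type _ := D.Obj × ℤ

/-- The completion by translations `A^[•]`: a morphism `A[i] → B[j]` of degree
`g` is a morphism `α : A → B` of `A` (of degree `g + j - i`), written
`⟨j|α|i⟩`; degrees, differential, composition and identities are given by the
formulas of Lemma `formulas_translations` of the paper. -/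
def trData (D : DGData k) : DGData k where
  Obj := trObj D
  Hom A B g := D.Hom A.1 B.1 (g - A.2 + B.2)
  homAdd _ _ _ := inferInstance
  homMod _ _ _ := inferInstance
  d := fun {A B g} x => ((-1 : k) ^ B.2) • D.cast (by ring) (D.d x)
  comp := fun {A B C g h} y x => D.cast (by ring) (D.comp y x)
  id A := D.cast (by ring) (D.id A.1)

/-- The canonical translations on the completion by translations:
`A[i][j] := A[i+j]` with structural isomorphism `⟨i| id_A |i+j⟩`. -/
def trTrans (D : DGData k) : TranslationData (trData D) where
  shift X j := (X.1, X.2 + j)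
  s X j := D.cast (by ring) (D.id X.1)
  sInv X j := D.cast (by ring) (D.id X.1)

end P

namespace P

variable {k : Type} [Field k]

/-! ## A∞-functors between dg categories

Dg categories are regarded as A∞-categories via `b₁(sα) := -s(dα)`,
`b₂(sα ⊗ sβ) := (-1)^{|α|} s(α ∘ β)`, `b_n := 0` for `n ≥ 3` (Construction
`dg_to_Ainf` of the paper), using Fukaya's sign convention.  We encode an
element `s α_n ⊗ ⋯ ⊗ s α_1` of `S(A n, A (n+1)) ⊗ ⋯ ⊗ S(A 0, A 1)` as a
`DGData.Chain`, recording each `α m` together with its *shifted* degree `g m`.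
An A∞-functor is then given by a map on objects together with, for every `n`,
a degree-0 component `f_n` sending such a chain to an element of
`S(f A 0, f A n)`, i.e. a morphism of degree `psum g n + 1`. -/

/-- The data of an A∞-functor between dg categories: its action on objects and
its components `f_n`, `n ≥ 1` (the value on chains of length `n` only depends
on the first `n` entries of the chain; this is part of `IsAInfFun` below). -/
structure AInfFunData (D E : DGData k) where
  obj : D.Obj → E.Obj
  f : ∀ (n : ℕ) (A : ℕ → D.Obj) (g : ℕ → ℤ), D.Chain A g →
    E.Hom (obj (A 0)) (obj (A n)) (psum g n + 1)

/-- The value of `b_j` (for the A∞-structure of a dg category) on the block of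
`j` consecutive entries of the chain `α` starting at position `l`:
`b₁(sα) = -s(dα)`, `b₂(sα ⊗ sβ) = (-1)^{|α|} s(α ∘ β)`, and `b_j = 0`
otherwise. -/
def DGData.blockVal (D : DGData k) {A : ℕ → D.Obj} {g : ℕ → ℤ}
    (α : D.Chain A g) (l : ℕ) :
    (j : ℕ) → D.Hom (A l) (A (l + j)) ((psum (fun m => g (l + m)) j + 1) + 1)
  | 1 => D.cast (by simp [psum_one]) (- D.d (α l))
  | 2 => ((-1 : k) ^ (g (l + 1) + 1)) •
      D.cast (by simp only [psum_two, Nat.add_zero]; ring)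
        (D.comp (α (l + 1)) (α l))
  | 0 => 0
  | (_ + 3) => 0

/-- The left hand side of the `n`-th defining equation of an A∞-functor
between dg categories (Equation (main) of the paper): the sum of the terms
`f_{i+1+l} ∘ (1^{⊗i} ⊗ b_j ⊗ 1^{⊗l})`, `j ∈ {1,2}`, with the signs coming from
Fukaya's convention. -/
def eqLhs {D E : DGData k} (F : AInfFunData D E) (n : ℕ) (A : ℕ → D.Obj)
    (g : ℕ → ℤ) (α : D.Chain A g) :
    E.Hom (F.obj (A 0)) (F.obj (A n)) ((psum g n + 1) + 1) :=
  ∑ x ∈ Finset.range n ×ˢ Finset.range 3,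
    if h : 1 ≤ x.2 ∧ x.1 + x.2 ≤ n then
      ((-1 : k) ^ (psum g n - psum g (x.1 + x.2))) •
        E.hcast (congrArg F.obj (splObj_zero A x.1 x.2))
          (congrArg F.obj (splObj_last A h.1 h.2))
          (by rw [psum_splG g h.1 h.2])
          (F.f (n - x.2 + 1) (splObj A x.1 x.2)
            (splG g x.1 x.2 (psum (fun m => g (x.1 + m)) x.2 + 1))
            (D.splChain α x.1 x.2 h.1 (D.blockVal α x.1 x.2)))
    else 0

/-- The right hand side of the `n`-th defining equation of an A∞-functor
between dg categories: `∑_{t=1}^{n-1} b₂ ∘ (f_{n-t} ⊗ f_t) + b₁ ∘ f_n`. -/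
def eqRhs {D E : DGData k} (F : AInfFunData D E) (n : ℕ) (A : ℕ → D.Obj)
    (g : ℕ → ℤ) (α : D.Chain A g) :
    E.Hom (F.obj (A 0)) (F.obj (A n)) ((psum g n + 1) + 1) :=
  (∑ t ∈ Finset.range n,
    if h : 1 ≤ t ∧ t < n then
      ((-1 : k) ^ (psum g n - psum g t + 1)) •
        E.hcast rfl (congrArg F.obj (congrArg A (by omega : t + (n - t) = n)))
          (by rw [psum_shift g t (n - t), show t + (n - t) = n from by omega]; ring)
          (E.comp
            (F.f (n - t) (fun m => A (t + m)) (fun m => g (t + m)) (fun m => α (t + m)))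
            (F.f t A g α))
    else 0) +
  (- (E.d (F.f n A g α)))

/-- The axioms for `F` to be an A∞-functor (with strict units) between dg
categories: the components `f_n` only depend on the first `n` entries of a
chain, they are `k`-multilinear, they strictly respect strict units, and they
satisfy the defining equations of an A∞-functor. -/
structure IsAInfFun {D E : DGData k} (F : AInfFunData D E) : Prop where
  ext : ∀ (n : ℕ) (A A' : ℕ → D.Obj) (g g' : ℕ → ℤ)
      (α : D.Chain A g) (α' : D.Chain A' g'),
      (∀ m, m ≤ n → A m = A' m) → (∀ m, m < n → g m = g' m) →
      (∀ m, m < n → HEq (α m) (α' m)) → HEq (F.f n A g α) (F.f n A' g' α')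
  map_add : ∀ (n : ℕ) (A : ℕ → D.Obj) (g : ℕ → ℤ) (α : D.Chain A g) (m : ℕ),
      m < n → ∀ u v : D.Hom (A m) (A (m + 1)) (g m + 1),
      F.f n A g (D.upd0 α m (u + v)) =
        F.f n A g (D.upd0 α m u) + F.f n A g (D.upd0 α m v)
  map_smul : ∀ (n : ℕ) (A : ℕ → D.Obj) (g : ℕ → ℤ) (α : D.Chain A g) (m : ℕ),
      m < n → ∀ (c : k) (u : D.Hom (A m) (A (m + 1)) (g m + 1)),
      F.f n A g (D.upd0 α m (c • u)) = c • F.f n A g (D.upd0 α m u)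
  unit_one : ∀ A₀ : D.Obj,
      F.f 1 (fun _ => A₀) (fun _ => (-1 : ℤ))
          (fun _ => D.cast (by norm_num) (D.id A₀)) =
        E.cast (by norm_num [psum]) (E.id (F.obj A₀))
  unit_vanish : ∀ (n : ℕ) (A : ℕ → D.Obj) (g : ℕ → ℤ) (α : D.Chain A g) (m : ℕ),
      2 ≤ n → m < n → A (m + 1) = A m → g m = -1 →
      HEq (α m) (D.id (A m)) → F.f n A g α = 0
  eqn : ∀ n, 1 ≤ n → ∀ (A : ℕ → D.Obj) (g : ℕ → ℤ) (α : D.Chain A g),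
      eqLhs F n A g α = eqRhs F n A g α

/-- The functor induced on homotopy categories sends (the class of) a closed
degree-0 morphism `φ` to (the class of) `s⁻¹ (f₁ (s φ))`.  We record the
underlying assignment, used to express `H⁰(F)`. -/
def AInfFunData.h0map {D E : DGData k} (F : AInfFunData D E) {A B : D.Obj}
    (φ : D.Hom A B 0) : E.Hom (F.obj A) (F.obj B) 0 :=
  E.hcast (congrArg F.obj rfl) (congrArg F.obj rfl) (by norm_num [psum])
    (F.f 1 (fun m => if m = 0 then A else B) (fun _ => (-1 : ℤ))
      (fun m => Nat.rec (motive := fun m =>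
          D.Hom ((fun m => if m = 0 then A else B) m)
            ((fun m => if m = 0 then A else B) (m + 1)) (-1 + 1))
        (D.cast (by norm_num) φ) (fun _ _ => 0) m))

end P

namespace P

variable {k : Type} [Field k]

lemma psum_tr (g i : ℕ → ℤ) : ∀ n,
    psum (fun m => g m - i m + i (m + 1)) n = psum g n - i 0 + i n := by
  intro n
  induction n with
  | zero => simp [psum]
  | succ n ih => rw [psum_succ, ih, psum_succ]; ring

/-- Construction `lift_to_translations` of the paper: the lift of an
A∞-functor `f : A_∞ → B_∞` to an A∞-functor `(A^[•])_∞ → B_∞`, where `B` is a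
dg category with translations.  On objects, `A[i] ↦ f(A)[i]`, and
`F_n( s⟨i_{n+1}|α^n|i_n⟩, …, s⟨i₂|α^1|i₁⟩ )
  = ⟨i_{n+1}| f_n(sα^n, …, sα^1) |i₁⟩ ⬝ (-1)^{i₁+⋯+i_{n+1}}`. -/
def liftTr {D E : DGData k} (F : AInfFunData D E) (T : TranslationData E) :
    AInfFunData (trData D) E where
  obj X := T.shift (F.obj X.1) X.2
  f n 𝔸 g α :=
    ((-1 : k) ^ (∑ m ∈ Finset.range (n + 1), (𝔸 m).2)) •
      E.cast (by rw [psum_tr g (fun m => (𝔸 m).2) n]; ring)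
        (E.comp (T.sInv (F.obj ((𝔸 n).1)) ((𝔸 n).2))
          (E.comp
            (F.f n (fun m => (𝔸 m).1)
              (fun m => g m - (𝔸 m).2 + (𝔸 (m + 1)).2)
              (fun m => D.cast (by ring) (α m)))
            (T.s (F.obj ((𝔸 0).1)) ((𝔸 0).2))))

end P

/-!
The assignment `x ↦ ⟨j|x|i⟩` is compatible with compositions, and with differentials up to the sign
`(-1)^j`.  Let `i₁, …, iₙ₊₁` be the shifts occurring in a chain in `A^[•]`, and compare the terms of
the `n`-th A∞-equation of `F` on this chain with those of `f` on the underlying chain in `A`.  The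
signs in the definitions of `F` and of the A∞-structure on `A^[•]` combine so that every term for
`F` equals `(-1)^(i₁ + ⋯ + iₙ₊₁ + iₙ₊₁) ⟨iₙ₊₁|x|i₁⟩`, where `x` is the corresponding term for `f`:
the sign does not depend on the term.
-/

namespace P

lemma neg_one_zpow_add {K : Type*} [DivisionRing K] (a b : ℤ) :
    (-1 : K) ^ (a + b) = (-1) ^ a * (-1) ^ b :=
  zpow_add₀ (neg_ne_zero.mpr one_ne_zero) a b

lemma neg_one_zpow_congr {K : Type*} [DivisionRing K] {a b : ℤ} (h : Even (a - b)) :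
    (-1 : K) ^ a = (-1) ^ b := by
  rw [← sub_add_cancel a b, neg_one_zpow_add, h.neg_one_zpow, one_mul]

variable {k : Type} [Field k]

namespace DGData

variable {D : DGData k} {A A' A'' B B' B'' C C' : D.Obj} {g g' g'' h h' : ℤ}

lemma cast_eq_hcast (hg : g = g') (x : D.Hom A B g) :
    D.cast hg x = D.hcast rfl rfl hg x := by
  subst hg; rfl

lemma eq_hcast_of_cast_eq {hg : g = g'} {x : D.Hom A B g} {y : D.Hom A B g'}
    (hxy : D.cast hg x = y) : x = D.hcast rfl rfl hg.symm y := by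
  subst hg; exact hxy

lemma cast_heq (hg : g = g') (x : D.Hom A B g) : HEq (D.cast hg x) x := by
  subst hg; rfl

lemma hcast_eq_iff_heq (hA : A = A') (hB : B = B') (hg : g = g') {x : D.Hom A B g}
    {y : D.Hom A' B' g'} : D.hcast hA hB hg x = y ↔ HEq x y := by
  subst hA hB hg; exact heq_iff_eq.symm

lemma hcast_hcast (hA : A = A') (hB : B = B') (hg : g = g') (hA' : A' = A'') (hB' : B' = B'')
    (hg' : g' = g'') (x : D.Hom A B g) :
    D.hcast hA' hB' hg' (D.hcast hA hB hg x) =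
      D.hcast (hA.trans hA') (hB.trans hB') (hg.trans hg') x := by
  subst hA hB hg hA' hB' hg'; rfl

lemma hcast_add (hA : A = A') (hB : B = B') (hg : g = g') (x y : D.Hom A B g) :
    D.hcast hA hB hg (x + y) = D.hcast hA hB hg x + D.hcast hA hB hg y := by
  subst hA hB hg; rfl

lemma hcast_zero (hA : A = A') (hB : B = B') (hg : g = g') :
    D.hcast hA hB hg (0 : D.Hom A B g) = 0 := by
  subst hA hB hg; rfl

lemma hcast_neg (hA : A = A') (hB : B = B') (hg : g = g') (x : D.Hom A B g) :
    D.hcast hA hB hg (-x) = -D.hcast hA hB hg x := by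
  subst hA hB hg; rfl

lemma hcast_smul (hA : A = A') (hB : B = B') (hg : g = g') (c : k) (x : D.Hom A B g) :
    D.hcast hA hB hg (c • x) = c • D.hcast hA hB hg x := by
  subst hA hB hg; rfl

lemma d_hcast (hA : A = A') (hB : B = B') (hg : g = g') (x : D.Hom A B g) :
    D.d (D.hcast hA hB hg x) = D.hcast hA hB (congrArg (· + 1) hg) (D.d x) := by
  subst hA hB hg; rfl

lemma hcast_comp (hB : B = B') (hC : C = C') (hh : h = h') (y : D.Hom B C h)
    (x : D.Hom A B' g) :
    D.comp (D.hcast hB hC hh y) x =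
      D.hcast rfl hC (by rw [hh]) (D.comp y (D.hcast rfl hB.symm rfl x)) := by
  subst hB hC hh; rfl

lemma comp_hcast (hA : A = A') (hg : g = g') (y : D.Hom B C h) (x : D.Hom A B g) :
    D.comp y (D.hcast hA rfl hg x) = D.hcast hA rfl (by rw [hg]) (D.comp y x) := by
  subst hA hg; rfl

end DGData

open DGData

section Translations

variable {E : DGData k} {X X' Y Y' Z W : E.Obj}

lemma IsDGCat.zero_comp (hE : IsDGCat E) {a b : ℤ} (x : E.Hom X Y a) :
    E.comp (0 : E.Hom Y Z b) x = 0 := by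
  simpa only [zero_smul] using hE.comp_smul_left 0 (0 : E.Hom Y Z b) x

lemma IsDGCat.comp_zero (hE : IsDGCat E) {a b : ℤ} (y : E.Hom Y Z b) :
    E.comp y (0 : E.Hom X Y a) = 0 := by
  simpa only [zero_smul] using hE.comp_smul_right 0 y (0 : E.Hom X Y a)

lemma IsDGCat.d_comp_of_isClosed_right (hE : IsDGCat E) {a b : ℤ} (y : E.Hom Y Z b)
    {x : E.Hom X Y a} (hx : E.IsClosed x) :
    E.d (E.comp y x) = E.cast (by ring) (E.comp (E.d y) x) := by
  rw [hE.leibniz, show E.d x = 0 from hx, hE.comp_zero, cast_eq_hcast _ (0 : E.Hom X Z _),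
    hcast_zero, smul_zero, add_zero]

lemma IsDGCat.d_comp_of_isClosed_left (hE : IsDGCat E) {a b : ℤ} {y : E.Hom Y Z b}
    (hy : E.IsClosed y) (x : E.Hom X Y a) :
    E.d (E.comp y x) = (-1 : k) ^ b • E.cast (by ring) (E.comp y (E.d x)) := by
  rw [hE.leibniz, show E.d y = 0 from hy, hE.zero_comp, cast_eq_hcast _ (0 : E.Hom X Z _),
    hcast_zero, zero_add]

lemma IsDGCat.comp_comp (hE : IsDGCat E) {a b c : ℤ} (z : E.Hom Z W c) (y : E.Hom Y Z b)
    (x : E.Hom X Y a) :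
    E.comp (E.comp z y) x = E.hcast rfl rfl (by ring) (E.comp z (E.comp y x)) :=
  eq_hcast_of_cast_eq (hE.assoc z y x).symm

variable {T : TranslationData E}

lemma IsTranslationData.s_comp_sInv_comp (hT : IsTranslationData E T) (hE : IsDGCat E) {a i : ℤ}
    (x : E.Hom X Y a) :
    E.comp (T.s Y i) (E.comp (T.sInv Y i) x) = E.hcast rfl rfl (by ring) x := by
  rw [hE.assoc, eq_hcast_of_cast_eq (hT.s_sInv Y i), cast_eq_hcast, hcast_comp,
    eq_hcast_of_cast_eq (hE.id_comp _)]
  simp only [hcast_hcast]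

/-- The assignment `x ↦ ⟨j|x|i⟩` as a linear map.  The degree `b` of the result is kept free, so
that no transport along equalities of degrees shows up in the formulas for `⟨j|x|i⟩`. -/
def trHomLinear (hE : IsDGCat E) (T : TranslationData E) (i j : ℤ) {a b : ℤ}
    (h : -j + (a + i) = b) : E.Hom X Y a →ₗ[k] E.Hom (T.shift X i) (T.shift Y j) b where
  toFun x := E.cast h (trHom E T j x i)
  map_add' x y := by
    simp only [trHom, hE.comp_add_left, hE.comp_add_right, cast_eq_hcast, hcast_add]
  map_smul' c x := by
    simp only [trHom, hE.comp_smul_left, hE.comp_smul_right, cast_eq_hcast, hcast_smul,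
      RingHom.id_apply]

lemma trHomLinear_apply (hE : IsDGCat E) {a b i j : ℤ} (h : -j + (a + i) = b) (x : E.Hom X Y a) :
    trHomLinear hE T i j h x = E.hcast rfl rfl h (E.comp (T.sInv Y j) (E.comp x (T.s X i))) :=
  cast_eq_hcast h _

lemma hcast_trHomLinear (hE : IsDGCat E) {a b i j a' b' i' j' : ℤ} (h : -j + (a + i) = b)
    (h' : -j' + (a' + i') = b') (hX : X = X') (hY : Y = Y') (hi : i = i') (hj : j = j')
    (ha : a = a') (x : E.Hom X Y a) :
    E.hcast (congrArg₂ T.shift hX hi) (congrArg₂ T.shift hY hj) (by rw [← h, ← h', hi, hj, ha])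
        (trHomLinear hE T i j h x) =
      trHomLinear hE T i' j' h' (E.hcast hX hY ha x) := by
  subst hX hY hi hj ha h h'; rfl

lemma trHomLinear_hcast (hE : IsDGCat E) {a a' b i j : ℤ} (h : -j + (a' + i) = b) (ha : a = a')
    (x : E.Hom X Y a) :
    trHomLinear hE T i j h (E.hcast rfl rfl ha x) =
      trHomLinear hE T i j (ha.symm ▸ h : -j + (a + i) = b) x := by
  subst ha; rfl

lemma hcast_smul_trHomLinear (hE : IsDGCat E) {a b i j a' b' i' j' : ℤ} (h : -j + (a + i) = b)
    (h' : -j' + (a' + i') = b') (hX : X = X') (hY : Y = Y') (hi : i = i') (hj : j = j')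
    (ha : a = a') (c : k) {c' : k} {x : E.Hom X Y a} {y : E.Hom X' Y' a'}
    (hxy : E.hcast hX hY ha x = c' • y) :
    E.hcast (congrArg₂ T.shift hX hi) (congrArg₂ T.shift hY hj) (by rw [← h, ← h', hi, hj, ha])
        (c • trHomLinear hE T i j h x) =
      (c * c') • trHomLinear hE T i' j' h' y := by
  rw [hcast_smul, hcast_trHomLinear hE h h' hX hY hi hj ha, hxy, map_smul, smul_smul]

lemma d_trHomLinear (hE : IsDGCat E) (hT : IsTranslationData E T) {a b i j : ℤ}
    (h : -j + (a + i) = b) (x : E.Hom X Y a) :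
    E.d (trHomLinear hE T i j h x) =
      (-1 : k) ^ j • trHomLinear hE T i j (by rw [← h]; ring) (E.d x) := by
  have sign : (-1 : k) ^ (-j) = (-1) ^ j := neg_one_zpow_congr ⟨-j, by ring⟩
  simp only [trHomLinear_apply, d_hcast, hE.d_comp_of_isClosed_left (hT.sInv_closed Y j),
    hE.d_comp_of_isClosed_right x (hT.s_closed X i), cast_eq_hcast, comp_hcast, hcast_smul,
    hcast_hcast, sign]

lemma comp_trHomLinear (hE : IsDGCat E) (hT : IsTranslationData E T) {a b p q i j l : ℤ}
    (hp : -j + (a + i) = p) (hq : -l + (b + j) = q) (y : E.Hom Y Z b) (x : E.Hom X Y a) :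
    E.comp (trHomLinear hE T j l hq y) (trHomLinear hE T i j hp x) =
      trHomLinear hE T i l (by rw [← hp, ← hq]; ring) (E.comp y x) := by
  simp only [trHomLinear_apply, hcast_comp, comp_hcast, hE.comp_comp,
    hT.s_comp_sInv_comp hE, hcast_hcast]

lemma trHomLinear_id (hE : IsDGCat E) (hT : IsTranslationData E T) (X : E.Obj) {b i : ℤ}
    (h : -i + (0 + i) = b) :
    trHomLinear hE T i i h (E.id X) = E.cast (by rw [← h]; ring) (E.id (T.shift X i)) := by
  rw [trHomLinear_apply, eq_hcast_of_cast_eq (hE.id_comp (T.s X i)), comp_hcast,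
    eq_hcast_of_cast_eq (hT.sInv_s X i), cast_eq_hcast]
  simp only [hcast_hcast]

lemma hcast_comp_smul_trHomLinear (hE : IsDGCat E) (hT : IsTranslationData E T)
    {Z' : E.Obj} {a b p q i j l e l' r : ℤ} (hp : -j + (a + i) = p) (hq : -l + (b + j) = q)
    (hr : -l' + (e + i) = r) (hZ : Z = Z') (hl : l = l') (he : b + a = e) (c' c : k)
    (y : E.Hom Y Z b) (x : E.Hom X Y a) :
    E.hcast rfl (congrArg₂ T.shift hZ hl) (by rw [← hp, ← hq, ← hr, ← he, hl]; ring)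
        (E.comp (c' • trHomLinear hE T j l hq y) (c • trHomLinear hE T i j hp x)) =
      (c' * c) • trHomLinear hE T i l' hr (E.hcast rfl hZ he (E.comp y x)) := by
  subst hZ hl he
  rw [hE.comp_smul_left, hE.comp_smul_right, comp_trHomLinear hE hT, smul_smul, hcast_smul]
  exact congrArg _ (hcast_trHomLinear hE _ hr rfl rfl rfl rfl rfl _)

end Translations

section Underlying

/-- The shifted degrees of the morphisms `αᵐ` underlying a chain of morphisms `⟨iₘ₊₁|αᵐ|iₘ⟩` of
shifted degrees `g m`. -/
def trDeg (i g : ℕ → ℤ) (m : ℕ) : ℤ := g m - i m + i (m + 1)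

lemma psum_trDeg (i g : ℕ → ℤ) (n : ℕ) : psum (trDeg i g) n = psum g n - i 0 + i n :=
  psum_tr g i n

lemma psum_trDeg_add_left (i g : ℕ → ℤ) (l n : ℕ) :
    psum (fun m => trDeg i g (l + m)) n = psum (fun m => g (l + m)) n - i l + i (l + n) :=
  psum_trDeg (fun m => i (l + m)) (fun m => g (l + m)) n

variable {D : DGData k}

/-- The morphism `α` underlying a morphism `⟨j|α|i⟩` of the completion by translations.  It is the
identity map, and records the passage from `trData D` back to `D`. -/
def trUnderlying {X Y : (trData D).Obj} {g : ℤ} :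
    (trData D).Hom X Y g →ₗ[k] D.Hom X.1 Y.1 (g - X.2 + Y.2) :=
  LinearMap.id

lemma trUnderlying_d {X Y : (trData D).Obj} {g : ℤ} (x : (trData D).Hom X Y g) :
    trUnderlying ((trData D).d x) =
      (-1 : k) ^ Y.2 • D.cast (by ring) (D.d (trUnderlying x)) :=
  rfl

lemma trUnderlying_comp {X Y Z : (trData D).Obj} {g h : ℤ} (y : (trData D).Hom Y Z h)
    (x : (trData D).Hom X Y g) :
    trUnderlying ((trData D).comp y x) =
      D.cast (by ring) (D.comp (trUnderlying y) (trUnderlying x)) :=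
  rfl

lemma trUnderlying_hcast {X X' Y Y' : (trData D).Obj} {g g' : ℤ} (hX : X = X') (hY : Y = Y')
    (hg : g = g') (x : (trData D).Hom X Y g) :
    trUnderlying ((trData D).hcast hX hY hg x) =
      D.hcast (congrArg Prod.fst hX) (congrArg Prod.fst hY) (by rw [hX, hY, hg])
        (trUnderlying x) := by
  subst hX hY hg; rfl

variable {A : ℕ → (trData D).Obj} {g : ℕ → ℤ}

/-- The chain of the morphisms `αᵐ` underlying a chain of morphisms `⟨iₘ₊₁|αᵐ|iₘ⟩`. -/
def underlyingChain (α : (trData D).Chain A g) :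
    D.Chain (fun m => (A m).1) (trDeg (fun m => (A m).2) g) :=
  fun m => D.cast (by rw [trDeg]; ring) (trUnderlying (α m))

lemma underlyingChain_apply (α : (trData D).Chain A g) (m : ℕ) :
    underlyingChain α m = D.hcast rfl rfl (by rw [trDeg]; ring) (trUnderlying (α m)) :=
  cast_eq_hcast _ _

lemma underlyingChain_heq (α : (trData D).Chain A g) (m : ℕ) : HEq (underlyingChain α m) (α m) :=
  DGData.cast_heq _ _

lemma underlyingChain_upd0 (α : (trData D).Chain A g) (m : ℕ)
    (u : (trData D).Hom (A m) (A (m + 1)) (g m + 1)) :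
    underlyingChain ((trData D).upd0 α m u) =
      D.upd0 (underlyingChain α) m
        (D.hcast rfl rfl (by rw [trDeg]; ring) (trUnderlying u)) := by
  funext t
  rw [underlyingChain_apply]
  by_cases ht : t = m
  · subst ht; simp only [DGData.upd0, dite_true]
  · simp only [DGData.upd0, ht, dite_false, underlyingChain_apply]

lemma underlying_blockVal (α : (trData D).Chain A g) (l j : ℕ) :
    D.hcast rfl rfl (by rw [psum_trDeg_add_left]; ring) (trUnderlying ((trData D).blockVal α l j)) =
      (-1 : k) ^ (∑ m ∈ Finset.range j, (A (l + 1 + m)).2) •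
        D.blockVal (underlyingChain α) l j := by
  match j with
  | 0 => simp only [DGData.blockVal, map_zero, hcast_zero, smul_zero]
  | 1 =>
    simp only [DGData.blockVal, Finset.sum_range_one, Nat.add_zero, cast_eq_hcast,
      trUnderlying_hcast, map_neg, trUnderlying_d, hcast_neg, hcast_smul, underlyingChain_apply,
      d_hcast, hcast_hcast, smul_neg]
  | 2 =>
    have sign : (-1 : k) ^ (g (l + 1) + 1) =
        (-1) ^ (∑ m ∈ Finset.range 2, (A (l + 1 + m)).2) *
          (-1) ^ (trDeg (fun m => (A m).2) g (l + 1) + 1) := by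
      rw [← neg_one_zpow_add, Finset.sum_range_succ, Finset.sum_range_one, trDeg]
      exact neg_one_zpow_congr ⟨-(A (l + 2)).2, by simp only [Nat.add_zero]; ring⟩
    simp only [DGData.blockVal, cast_eq_hcast, map_smul, sign, mul_smul,
      trUnderlying_hcast, trUnderlying_comp, hcast_smul, underlyingChain_apply,
      comp_hcast, hcast_comp, hcast_hcast]
  | _ + 3 => simp only [DGData.blockVal, map_zero, hcast_zero, smul_zero]

lemma splObj_map {τ σ : Type*} (φ : τ → σ) (A : ℕ → τ) (l j t : ℕ) :
    φ (splObj A l j t) = splObj (fun m => φ (A m)) l j t := by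
  unfold splObj; split_ifs <;> rfl

lemma trDeg_splG (i g : ℕ → ℤ) {l j : ℕ} (hj : 1 ≤ j) (w : ℤ) :
    trDeg (splObj i l j) (splG g l j w) = splG (trDeg i g) l j (w - i l + i (l + j)) := by
  funext t
  rw [trDeg]
  rcases lt_trichotomy t l with h | rfl | h
  · rw [splG_lt h, splG_lt h, splObj_le _ (by omega), splObj_le _ (by omega), trDeg]
  · rw [splG_eq rfl, splG_eq rfl, splObj_le _ le_rfl, splObj_gt _ (by omega),
      show t + 1 + j - 1 = t + j by omega]
  · rw [splG_gt (by omega) (by omega), splG_gt (by omega) (by omega), splObj_gt _ (by omega),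
      splObj_gt _ (by omega), trDeg, show t + 1 + j - 1 = t + j - 1 + 1 by omega]

lemma splG_trDeg_splObj (A : ℕ → trObj D) (g : ℕ → ℤ) {l j : ℕ} (hj : 1 ≤ j) {w w' : ℤ}
    (hw : w' = w - (A l).2 + (A (l + j)).2) :
    trDeg (fun m => (splObj A l j m).2) (splG g l j w) =
      splG (trDeg (fun m => (A m).2) g) l j w' := by
  rw [funext (splObj_map Prod.snd A l j), trDeg_splG _ _ hj, hw]

lemma underlyingChain_splChain (α : (trData D).Chain A g) {l j : ℕ} (hj : 1 ≤ j) {w w' : ℤ}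
    (hw : w' = w - (A l).2 + (A (l + j)).2) (v : (trData D).Hom (A l) (A (l + j)) (w + 1))
    (t : ℕ) :
    D.hcast (splObj_map Prod.fst A l j t) (splObj_map Prod.fst A l j (t + 1))
        (congrArg (· + 1) (congrFun (splG_trDeg_splObj A g hj hw) t))
        (underlyingChain ((trData D).splChain α l j hj v) t) =
      D.splChain (w := w') (underlyingChain α) l j hj
        (D.hcast rfl rfl (by rw [hw]; ring) (trUnderlying v)) t := by
  rw [underlyingChain_apply]
  unfold DGData.splChain
  split_ifs
  · simp only [trUnderlying_hcast, underlyingChain_apply, hcast_hcast]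
    exact hcast_hcast ..
  · simp only [trUnderlying_hcast, hcast_hcast]
    exact hcast_hcast ..
  · simp only [trUnderlying_hcast, underlyingChain_apply, hcast_hcast]
    exact hcast_hcast ..

lemma sum_splObj (i : ℕ → ℤ) {l j n : ℕ} (hj : 1 ≤ j) (hn : l + j ≤ n) :
    ∑ m ∈ Finset.range (n - j + 1 + 1), splObj i l j m + ∑ m ∈ Finset.range j, i (l + 1 + m) =
      ∑ m ∈ Finset.range (n + 1), i m + i (l + j) := by
  obtain ⟨d, rfl⟩ := Nat.exists_eq_add_of_le hn
  have before : ∑ m ∈ Finset.range (l + 1), splObj i l j m = ∑ m ∈ Finset.range (l + 1), i m :=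
    Finset.sum_congr rfl fun m hm => splObj_le i (Finset.mem_range_succ_iff.mp hm)
  have after : ∑ m ∈ Finset.range (d + 1), splObj i l j (l + 1 + m) =
      ∑ m ∈ Finset.range d, i (l + 1 + j + m) + i (l + j) := by
    rw [Finset.sum_range_succ']
    congr 1
    · refine Finset.sum_congr rfl fun m _ => ?_
      rw [splObj_gt i (by omega), show l + 1 + (m + 1) + j - 1 = l + 1 + j + m by omega]
    · rw [splObj_gt i (by omega), show l + 1 + 0 + j - 1 = l + j by omega]
  rw [show l + j + d - j + 1 + 1 = l + 1 + (d + 1) by omega, Finset.sum_range_add, before, after,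
    show l + j + d + 1 = l + 1 + j + d by omega, Finset.sum_range_add i (l + 1 + j),
    Finset.sum_range_add i (l + 1)]
  ring

end Underlying

section Functor

variable {D E : DGData k} {F : AInfFunData D E}

lemma IsAInfFun.hcast_f (hF : IsAInfFun F) {n : ℕ} {A A' : ℕ → D.Obj} {g g' : ℕ → ℤ}
    {α : D.Chain A g} {α' : D.Chain A' g'} (hA : ∀ m, A m = A' m) (hg : ∀ m, g m = g' m)
    (hα : ∀ m, D.hcast (hA m) (hA (m + 1)) (by rw [hg]) (α m) = α' m) :
    E.hcast (congrArg F.obj (hA 0)) (congrArg F.obj (hA n)) (by rw [funext hg])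
      (F.f n A g α) = F.f n A' g' α' :=
  (hcast_eq_iff_heq _ _ _).mpr <| hF.ext n A A' g g' α α' (fun m _ => hA m) (fun m _ => hg m)
    fun m _ => (hcast_eq_iff_heq _ _ _).mp (hα m)

lemma IsAInfFun.f_splChain_smul (hF : IsAInfFun F) {A : ℕ → D.Obj} {g : ℕ → ℤ}
    (α : D.Chain A g) {l j n : ℕ} (hj : 1 ≤ j) (hn : l < n) {w : ℤ} (c : k)
    (v : D.Hom (A l) (A (l + j)) (w + 1)) :
    F.f n _ _ (D.splChain α l j hj (c • v)) = c • F.f n _ _ (D.splChain α l j hj v) := by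
  have splChain_eq_upd0 (v : D.Hom (A l) (A (l + j)) (w + 1)) : D.splChain α l j hj v =
      D.upd0 (D.splChain α l j hj 0) l (D.splChain α l j hj v l) := by
    funext t
    by_cases ht : t = l
    · subst ht; simp only [DGData.upd0, dite_true]
    · simp only [DGData.upd0, DGData.splChain, ht, dite_false]
  have splChain_smul : D.splChain α l j hj (c • v) l = c • D.splChain α l j hj v l := by
    simp only [DGData.splChain, lt_irrefl, dite_false, dite_true, hcast_smul]
  rw [splChain_eq_upd0 (c • v), splChain_smul, hF.map_smul _ _ _ _ _ hn, ← splChain_eq_upd0]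

variable {T : TranslationData E} {A : ℕ → (trData D).Obj} {g : ℕ → ℤ}

lemma liftTr_f (hE : IsDGCat E) (T : TranslationData E) (F : AInfFunData D E) (n : ℕ)
    (α : (trData D).Chain A g) :
    (liftTr F T).f n A g α = (-1 : k) ^ (∑ m ∈ Finset.range (n + 1), (A m).2) •
      trHomLinear hE T (A 0).2 (A n).2 (by rw [psum_trDeg]; ring)
        (F.f n (fun m => (A m).1) (trDeg (fun m => (A m).2) g) (underlyingChain α)) :=
  rfl

lemma liftTr_f_splChain_blockVal (hE : IsDGCat E) (hF : IsAInfFun F)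
    (α : (trData D).Chain A g) {l j n : ℕ} (hj : 1 ≤ j) (hn : l + j ≤ n) :
    E.hcast (congrArg (liftTr F T).obj (splObj_zero A l j))
        (congrArg (liftTr F T).obj (splObj_last A hj hn)) (by rw [psum_splG g hj hn])
        ((liftTr F T).f (n - j + 1) (splObj A l j)
          (splG g l j (psum (fun m => g (l + m)) j + 1))
          ((trData D).splChain α l j hj ((trData D).blockVal α l j))) =
      (-1 : k) ^ (∑ m ∈ Finset.range (n + 1), (A m).2 + (A (l + j)).2) •
        trHomLinear hE T (A 0).2 (A n).2 (a := psum (trDeg (fun m => (A m).2) g) n + 1 + 1)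
          (by rw [psum_trDeg]; ring)
          (E.hcast (congrArg F.obj (splObj_zero _ l j)) (congrArg F.obj (splObj_last _ hj hn))
            (by rw [psum_splG _ hj hn])
            (F.f (n - j + 1) (splObj (fun m => (A m).1) l j)
              (splG (trDeg (fun m => (A m).2) g) l j
                (psum (fun m => trDeg (fun m => (A m).2) g (l + m)) j + 1))
              (D.splChain (underlyingChain α) l j hj (D.blockVal (underlyingChain α) l j)))) := by
  have degree : psum (fun m => trDeg (fun m => (A m).2) g (l + m)) j + 1 =
      psum (fun m => g (l + m)) j + 1 - (A l).2 + (A (l + j)).2 := by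
    rw [psum_trDeg_add_left]; ring
  have value := hF.hcast_f (n := n - j + 1) (splObj_map Prod.fst A l j)
    (congrFun (splG_trDeg_splObj A g hj degree))
    (underlyingChain_splChain α hj degree ((trData D).blockVal α l j))
  rw [underlying_blockVal, hF.f_splChain_smul _ hj (by omega)] at value
  have sign : ∑ m ∈ Finset.range (n - j + 1 + 1), (splObj A l j m).2 +
      ∑ m ∈ Finset.range j, (A (l + 1 + m)).2 =
        ∑ m ∈ Finset.range (n + 1), (A m).2 + (A (l + j)).2 :=
    (congrArg (· + _) (Finset.sum_congr rfl fun m _ => splObj_map Prod.snd A l j m)).trans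
      (sum_splObj (fun m => (A m).2) hj hn)
  have first : splObj A l j 0 = A 0 := splObj_zero A l j
  have last : splObj A l j (n - j + 1) = A n := splObj_last A hj hn
  rw [← sign, neg_one_zpow_add]
  refine hcast_smul_trHomLinear hE _ _ (congrArg (fun X => F.obj X.1) first)
    (congrArg (fun X => F.obj X.1) last) (congrArg Prod.snd first) (congrArg Prod.snd last)
    (congrArg (· + 1) ((congrArg (psum · _) (splG_trDeg_splObj A g hj degree)).trans
      (psum_splG _ hj hn))) _ ?_
  rw [← hcast_smul, ← value]
  exact (hcast_hcast ..).symm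

lemma eqLhs_liftTr (hE : IsDGCat E) (hF : IsAInfFun F) (n : ℕ) (α : (trData D).Chain A g) :
    eqLhs (liftTr F T) n A g α =
      (-1 : k) ^ (∑ m ∈ Finset.range (n + 1), (A m).2 + (A n).2) •
        trHomLinear hE T (A 0).2 (A n).2 (by rw [psum_trDeg]; ring)
          (eqLhs F n (fun m => (A m).1) (trDeg (fun m => (A m).2) g) (underlyingChain α)) := by
  unfold eqLhs
  rw [map_sum, Finset.smul_sum]
  refine Finset.sum_congr rfl fun ⟨l, j⟩ _ => ?_
  dsimp only
  split_ifs with h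
  · have sign : (-1 : k) ^ (psum g n - psum g (l + j)) *
        (-1) ^ (∑ m ∈ Finset.range (n + 1), (A m).2 + (A (l + j)).2) =
          (-1) ^ (∑ m ∈ Finset.range (n + 1), (A m).2 + (A n).2) *
            (-1) ^ (psum (trDeg (fun m => (A m).2) g) n -
              psum (trDeg (fun m => (A m).2) g) (l + j)) := by
      rw [← neg_one_zpow_add, ← neg_one_zpow_add, psum_trDeg, psum_trDeg]
      exact neg_one_zpow_congr ⟨(A (l + j)).2 - (A n).2, by ring⟩
    rw [map_smul, smul_smul, ← sign, mul_smul]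
    exact congrArg _ (liftTr_f_splChain_blockVal hE hF α h.1 h.2)
  · rw [map_zero, smul_zero]; rfl

lemma eqRhs_liftTr (hE : IsDGCat E) (hT : IsTranslationData E T) (n : ℕ)
    (α : (trData D).Chain A g) :
    eqRhs (liftTr F T) n A g α =
      (-1 : k) ^ (∑ m ∈ Finset.range (n + 1), (A m).2 + (A n).2) •
        trHomLinear hE T (A 0).2 (A n).2 (by rw [psum_trDeg]; ring)
          (eqRhs F n (fun m => (A m).1) (trDeg (fun m => (A m).2) g) (underlyingChain α)) := by
  unfold eqRhs
  rw [map_add, smul_add, map_sum, Finset.smul_sum]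
  congr 1
  · refine Finset.sum_congr rfl fun t _ => ?_
    split_ifs with h
    · have sum_split : ∑ m ∈ Finset.range (n + 1), (A m).2 + (A t).2 =
          ∑ m ∈ Finset.range (n - t + 1), (A (t + m)).2 +
            ∑ m ∈ Finset.range (t + 1), (A m).2 := by
        rw [show n + 1 = t + (n - t + 1) by omega, Finset.sum_range_add, Finset.sum_range_succ _ t]
        ring
      have sign : (-1 : k) ^ (psum g n - psum g t + 1) *
          ((-1) ^ (∑ m ∈ Finset.range (n - t + 1), (A (t + m)).2) *
            (-1) ^ (∑ m ∈ Finset.range (t + 1), (A m).2)) =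
          (-1) ^ (∑ m ∈ Finset.range (n + 1), (A m).2 + (A n).2) *
            (-1) ^ (psum (trDeg (fun m => (A m).2) g) n -
              psum (trDeg (fun m => (A m).2) g) t + 1) := by
        simp only [← neg_one_zpow_add, ← sum_split, psum_trDeg]
        exact neg_one_zpow_congr ⟨(A t).2 - (A n).2, by ring⟩
      have last : A (t + (n - t)) = A n := congrArg A (by omega)
      rw [map_smul, smul_smul, ← sign, mul_smul]
      exact congrArg _ (hcast_comp_smul_trHomLinear hE hT _ _ _
        (congrArg (fun X => F.obj X.1) last) (congrArg Prod.snd last) _ _ _ _ _)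
    · rw [map_zero, smul_zero]; rfl
  · rw [map_neg, smul_neg]
    refine congrArg Neg.neg ?_
    rw [neg_one_zpow_add, mul_smul, ← d_trHomLinear hE hT]
    exact hE.d_smul _ _

lemma heq_liftTr_f (hE : IsDGCat E) (hF : IsAInfFun F) {n : ℕ} {A' : ℕ → (trData D).Obj}
    {g' : ℕ → ℤ} {α : (trData D).Chain A g} {α' : (trData D).Chain A' g'}
    (hA : ∀ m ≤ n, A m = A' m) (hg : ∀ m < n, g m = g' m) (hα : ∀ m < n, HEq (α m) (α' m)) :
    HEq ((liftTr F T).f n A g α) ((liftTr F T).f n A' g' α') := by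
  have sum_eq : ∑ m ∈ Finset.range (n + 1), (A m).2 = ∑ m ∈ Finset.range (n + 1), (A' m).2 :=
    Finset.sum_congr rfl fun m hm => by rw [hA m (Finset.mem_range_succ_iff.mp hm)]
  have degree (m : ℕ) (hm : m < n) :
      trDeg (fun m => (A m).2) g m = trDeg (fun m => (A' m).2) g' m := by
    rw [trDeg, trDeg, hg m hm, hA m hm.le, hA (m + 1) hm]
  have value := hF.ext n _ _ _ _ (underlyingChain α) (underlyingChain α')
    (fun m hm => congrArg Prod.fst (hA m hm)) degree
    fun m hm => (underlyingChain_heq α m).trans ((hα m hm).trans (underlyingChain_heq α' m).symm)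
  rw [liftTr_f hE, liftTr_f hE, ← sum_eq]
  refine (hcast_eq_iff_heq (congrArg (liftTr F T).obj (hA 0 n.zero_le))
    (congrArg (liftTr F T).obj (hA n le_rfl))
    (congrArg (· + 1) (Finset.sum_congr rfl fun m hm => hg m (Finset.mem_range.mp hm)))).mp ?_
  refine (hcast_smul ..).trans (congrArg _ ((hcast_trHomLinear hE _ _
    (congrArg (fun X => F.obj X.1) (hA 0 n.zero_le))
    (congrArg (fun X => F.obj X.1) (hA n le_rfl)) (congrArg Prod.snd (hA 0 n.zero_le))
    (congrArg Prod.snd (hA n le_rfl)) (congrArg (· + 1)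
      (Finset.sum_congr rfl fun m hm => degree m (Finset.mem_range.mp hm))) _).trans
    (congrArg _ ((hcast_eq_iff_heq ..).mpr value))))

lemma liftTr_f_of_even (hE : IsDGCat E) (hF : IsAInfFun F) {n : ℕ} {g' : ℕ → ℤ}
    {α : (trData D).Chain A g} {β : D.Chain (fun m => (A m).1) g'}
    (hA : Even (∑ m ∈ Finset.range (n + 1), (A m).2))
    (hg : ∀ m, trDeg (fun m => (A m).2) g m = g' m) (hα : ∀ m, HEq (α m) (β m)) :
    (liftTr F T).f n A g α =
      trHomLinear hE T (A 0).2 (A n).2 (by rw [← funext hg, psum_trDeg]; ring)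
        (F.f n (fun m => (A m).1) g' β) := by
  have value := hF.hcast_f (n := n) (α := underlyingChain α) (α' := β) (fun _ => rfl) hg
    fun m => (hcast_eq_iff_heq ..).mpr ((underlyingChain_heq α m).trans (hα m))
  rw [liftTr_f hE, hA.neg_one_zpow, ← value, trHomLinear_hcast]
  exact one_smul ..

lemma liftTr_f_id (hE : IsDGCat E) (hT : IsTranslationData E T) (hF : IsAInfFun F)
    (X : (trData D).Obj) :
    (liftTr F T).f 1 (fun _ => X) (fun _ => -1)
        (fun _ => (trData D).cast (by norm_num) ((trData D).id X)) =
      E.cast (by norm_num [psum]) (E.id ((liftTr F T).obj X)) := by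
  have even_sum : Even (∑ _m ∈ Finset.range (1 + 1), X.2) := by
    rw [Finset.sum_const, Finset.card_range]
    exact ⟨X.2, two_nsmul X.2⟩
  have id_heq : HEq ((trData D).cast (by norm_num : (0 : ℤ) = -1 + 1) ((trData D).id X))
      (D.cast (by norm_num : (0 : ℤ) = -1 + 1) (D.id X.1)) :=
    (DGData.cast_heq _ _).trans ((DGData.cast_heq _ (D.id X.1)).trans (DGData.cast_heq _ _).symm)
  refine (liftTr_f_of_even (A := fun _ => X) (g' := fun _ => -1) hE hF even_sum
    (fun _ => by rw [trDeg]; ring) fun _ => id_heq).trans ?_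
  rw [hF.unit_one, cast_eq_hcast, trHomLinear_hcast]
  exact trHomLinear_id hE hT _ _

lemma isAInfFun_liftTr (hE : IsDGCat E) (hT : IsTranslationData E T) (hF : IsAInfFun F) :
    IsAInfFun (liftTr F T) where
  ext _ _ _ _ _ _ _ hA hg hα := heq_liftTr_f hE hF hA hg hα
  map_add n A g α m hm u v := by
    simp only [liftTr_f hE, underlyingChain_upd0, map_add]
    rw [hcast_add, hF.map_add _ _ _ _ _ hm, map_add]
    exact smul_add ..
  map_smul n A g α m hm c u := by
    simp only [liftTr_f hE, underlyingChain_upd0, map_smul]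
    rw [hcast_smul, hF.map_smul _ _ _ _ _ hm, map_smul, smul_smul, mul_comm, mul_smul]
    rfl
  unit_one := liftTr_f_id hE hT hF
  unit_vanish n A g α m hn hm hA hg hα := by
    have vanish : F.f n _ _ (underlyingChain α) = 0 :=
      hF.unit_vanish n _ _ _ m hn hm (congrArg Prod.fst hA) (by rw [trDeg, hA, hg]; ring)
        ((underlyingChain_heq α m).trans (hα.trans (DGData.cast_heq _ _)))
    rw [liftTr_f hE, ← map_smul, vanish, smul_zero, map_zero]
    rfl
  eqn n hn A g α := by rw [eqLhs_liftTr hE hF, eqRhs_liftTr hE hT, hF.eqn n hn]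

lemma liftTr_f_zero (hE : IsDGCat E) (hF : IsAInfFun F) (n : ℕ) (A : ℕ → D.Obj) (g : ℕ → ℤ)
    (α : D.Chain A g) :
    (liftTr F T).f n (fun m => (A m, (0 : ℤ))) g (fun m => D.cast (by ring) (α m)) =
      E.cast (by ring)
        (E.comp (T.sInv (F.obj (A n)) 0)
          (E.comp (F.f n A g α) (T.s (F.obj (A 0)) 0))) :=
  liftTr_f_of_even hE hF (by simp) (fun m => by rw [trDeg]; ring) fun m => DGData.cast_heq _ _

end Functor

end P

namespace P

theorem statement_12_general {k : Type} [Field k] (D E : DGData k) (hE : IsDGCat E)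
    (T : TranslationData E) (hT : IsTranslationData E T) (F : AInfFunData D E)
    (hF : IsAInfFun F) :
    IsAInfFun (liftTr F T) ∧
    ∀ (n : ℕ) (A : ℕ → D.Obj) (g : ℕ → ℤ) (α : D.Chain A g),
      (liftTr F T).f n (fun m => (A m, (0 : ℤ))) g
          (fun m => D.cast (by ring) (α m)) =
        E.cast (by ring)
          (E.comp (T.sInv (F.obj (A n)) 0)
            (E.comp (F.f n A g α) (T.s (F.obj (A 0)) 0))) :=
  ⟨isAInfFun_liftTr hE hT hF, liftTr_f_zero hE hF⟩

/-- **Statement 12.** Let `A` be a dg category and `B` a dg category with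
translations, and let `f : A_∞ → B_∞` be an A∞-functor.  Then the lift `F`
defined in Construction `lift_to_translations` (formalized as `liftTr`), with
`F(A[i]) := f(A)[i]` and
`F_n(s⟨i_{n+1}|α^n|i_n⟩, …, s⟨i₂|α^1|i₁⟩)
  = ⟨i_{n+1}|f_n(sα^n,…,sα^1)|i₁⟩ ⬝ (-1)^{i₁+⋯+i_{n+1}}`,
is an A∞-functor `(A^[•])_∞ → B_∞`, and it extends `f` along the inclusion
`A → A^[•]`, `A ↦ A[0]` (on chains of objects `A[0]` its value is `f_n`,
viewed through the structural isomorphisms of the chosen `0`-th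
translations). -/
theorem statement_12 {k : Type} [Field k] (D E : DGData k)
    (hD : IsDGCat D) (hE : IsDGCat E) (T : TranslationData E)
    (hT : IsTranslationData E T) (F : AInfFunData D E) (hF : IsAInfFun F) :
    IsAInfFun (liftTr F T) ∧
    ∀ (n : ℕ) (A : ℕ → D.Obj) (g : ℕ → ℤ) (α : D.Chain A g),
      (liftTr F T).f n (fun m => (A m, (0 : ℤ))) g
          (fun m => D.cast (by ring) (α m)) =
        E.cast (by ring)
          (E.comp (T.sInv (F.obj (A n)) 0)
            (E.comp (F.f n A g α) (T.s (F.obj (A 0)) 0))) :=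
  statement_12_general D E hE T hT F hF

end P
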